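/- Let Σ = {a, b, c} be a three-letter alphabet. For any relatively prime integers n₁, n₂ ≥ 2 there exist regular languages L₁, L₂ ⊆ Σ* with tc(Lᵢ) = nᵢ + 1 (i = 1, 2) such that tc(L₁ ∪ L₂) = tc(L₁)·tc(L₂) + tc(L₁) + tc(L₂) − 1. -/

import Mathlib

/-- An incomplete DFA over alphabet `α` with state type `σ`:
the transition function is a partial function, modelled as `Option`-valued. -/
structure IDFA (α : Type) (σ : Type) where
  /-- The (partial) transition function. -/
  step : σ → α → Option σ
  /-- The start state. -/
  start : σ
  /-- The set of accepting states. -/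
  accept : Set σ

namespace IDFA

variable {α σ : Type}

/-- The extended (partial) transition function on words. -/
def evalFrom (A : IDFA α σ) (q : σ) (w : List α) : Option σ :=
  w.foldl (fun oq a => oq.bind fun p => A.step p a) (some q)

/-- Running the automaton from the start state. -/
def eval (A : IDFA α σ) (w : List α) : Option σ :=
  A.evalFrom A.start w

/-- The language recognized by an incomplete DFA: words on which the run is
defined and ends in an accepting state. -/
def accepts (A : IDFA α σ) : Set (List α) :=
  {w | ∃ q ∈ A.accept, A.eval w = some q}

/-- `#tr(A)`: the number of (defined) transitions of `A`. -/
noncomputable def trCount (A : IDFA α σ) : ℕ :=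
  {p : σ × α | (A.step p.1 p.2).isSome}.ncard

/-- `#tr(A, b)`: the number of `b`-transitions of `A`. -/
noncomputable def trCountOn (A : IDFA α σ) (b : α) : ℕ :=
  {q : σ | (A.step q b).isSome}.ncard

/-- An incomplete DFA is connected if every state is reachable from the start state. -/
def Connected (A : IDFA α σ) : Prop :=
  ∀ q : σ, ∃ w : List α, A.evalFrom A.start w = some q

end IDFA

/-- A language is regular iff it is recognized by some incomplete DFA with
finitely many states. -/
def IsRegularLang {α : Type} (L : Set (List α)) : Prop :=
  ∃ (σ : Type) (_ : Finite σ) (A : IDFA α σ), A.accepts = L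

/-- `tc(L)`: the transition complexity of `L`, i.e. the minimal number of
transitions of any incomplete DFA recognizing `L`. -/
noncomputable def tc {α : Type} (L : Set (List α)) : ℕ :=
  sInf {n | ∃ (σ : Type) (_ : Finite σ) (A : IDFA α σ), A.accepts = L ∧ A.trCount = n}

/-- `tc_b(L)`: the `b`-transition complexity of `L`, i.e. the minimal number of
`b`-transitions of any incomplete DFA recognizing `L`. -/
noncomputable def tcOn {α : Type} (L : Set (List α)) (b : α) : ℕ :=
  sInf {n | ∃ (σ : Type) (_ : Finite σ) (A : IDFA α σ), A.accepts = L ∧ A.trCountOn b = n}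

/-- `sc(L)`: the (incomplete-DFA) state complexity of `L`, i.e. the number of
states of a minimal incomplete DFA recognizing `L`. -/
noncomputable def sc {α : Type} (L : Set (List α)) : ℕ :=
  sInf {n | ∃ (σ : Type) (_ : Finite σ) (A : IDFA α σ), A.accepts = L ∧ Nat.card σ = n}

namespace IDFA

variable {α σ τ : Type}

theorem foldl_none (A : IDFA α σ) (w : List α) :
    w.foldl (fun oq a => oq.bind fun p => A.step p a) none = none := by
  induction w with
  | nil => rfl
  | cons a w ih => simpa using ih

theorem evalFrom_append (A : IDFA α σ) (q : σ) (u v : List α) :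
    A.evalFrom q (u ++ v) = (A.evalFrom q u).bind fun p => A.evalFrom p v := by
  unfold evalFrom
  rw [List.foldl_append]
  cases List.foldl (fun oq a => oq.bind fun p => A.step p a) (some q) u with
  | none => simpa using foldl_none A v
  | some p => rfl

theorem evalFrom_nil (A : IDFA α σ) (q : σ) : A.evalFrom q [] = some q := rfl

theorem evalFrom_single (A : IDFA α σ) (q : σ) (a : α) : A.evalFrom q [a] = A.step q a := rfl

theorem evalFrom_cons (A : IDFA α σ) (q : σ) (a : α) (v : List α) :
    A.evalFrom q (a :: v) = (A.step q a).bind fun p => A.evalFrom p v := by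
  rw [← List.singleton_append, evalFrom_append, evalFrom_single]

/-- acceptance from a state -/
def acc (A : IDFA α σ) (q : σ) (z : List α) : Prop := ∃ f ∈ A.accept, A.evalFrom q z = some f

theorem mem_accepts_append (A : IDFA α σ) {u z : List α} {q : σ} (h : A.evalFrom A.start u = some q) :
    u ++ z ∈ A.accepts ↔ A.acc q z := by
  simp [accepts, eval, acc, evalFrom_append, h]

theorem trCount_le [Finite α] [Finite σ] [Finite τ] (B : IDFA α τ) (A : IDFA α σ)
    (hL : A.accepts = B.accepts) (hc : B.Connected)
    (hlive : ∀ q, ∃ z, B.acc q z)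
    (hdist : ∀ p q, (∀ z, B.acc p z ↔ B.acc q z) → p = q) :
    B.trCount ≤ A.trCount := by
  choose w hw using hc
  have key : ∀ q x, (B.step q x).isSome →
      ∃ p, A.evalFrom A.start (w q) = some p ∧ (A.step p x).isSome := by
    intro q x h
    obtain ⟨r, hr⟩ := Option.isSome_iff_exists.1 h
    obtain ⟨z, hz⟩ := hlive r
    have h1 : w q ++ (x :: z) ∈ B.accepts := by
      rw [mem_accepts_append B (hw q)]
      simpa [acc, evalFrom_cons, hr] using hz
    rw [← hL] at h1
    obtain ⟨f, hf, h2⟩ := h1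
    rw [eval, evalFrom_append] at h2
    cases hp : A.evalFrom A.start (w q) with
    | none => simp [hp] at h2
    | some p =>
      refine ⟨p, rfl, ?_⟩
      rw [hp, Option.bind_some, evalFrom_cons] at h2
      cases hs : A.step p x with
      | none => simp [hs] at h2
      | some _ => rfl
  unfold trCount
  refine Set.ncard_le_ncard_of_injOn
    (fun p => ((A.evalFrom A.start (w p.1)).getD A.start, p.2)) ?_ ?_ (Set.toFinite _)
  · rintro ⟨q, x⟩ h
    obtain ⟨p, hp, hs⟩ := key q x h
    simpa [hp] using hs
  · rintro ⟨q, x⟩ h ⟨q', x'⟩ h' heq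
    obtain ⟨p, hp, hs⟩ := key q x h
    obtain ⟨p', hp', hs'⟩ := key q' x' h'
    simp only [hp, hp', Option.getD_some, Prod.mk.injEq] at heq
    obtain ⟨rfl, rfl⟩ := heq
    have : q = q' := by
      apply hdist
      intro z
      rw [← mem_accepts_append B (hw q), ← mem_accepts_append B (hw q'), ← hL,
        mem_accepts_append A hp, mem_accepts_append A hp']
    rw [this]

theorem tc_eq [Finite α] [Finite τ] (B : IDFA α τ) (hc : B.Connected)
    (hlive : ∀ q, ∃ z, B.acc q z)
    (hdist : ∀ p q, (∀ z, B.acc p z ↔ B.acc q z) → p = q) :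
    tc B.accepts = B.trCount := by
  apply le_antisymm
  · exact Nat.sInf_le ⟨τ, inferInstance, B, rfl, rfl⟩
  · refine le_csInf ⟨_, τ, inferInstance, B, rfl, rfl⟩ ?_
    rintro n ⟨σ, _, A, hL, rfl⟩
    exact trCount_le B A hL hc hlive hdist

end IDFA

open IDFA

/-- cyclic automaton -/
def cyc (n : ℕ) (x : Fin 3) : IDFA (Fin 3) (ZMod n) where
  step i l := if l = 0 then some (i + 1) else if l = x then (if i = 0 then some 0 else none) else none
  start := 0
  accept := {0}

theorem cyc_rep (n : ℕ) (x : Fin 3) (i : ZMod n) (k : ℕ) :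
    (cyc n x).evalFrom i (List.replicate k 0) = some (i + k) := by
  induction k with
  | zero => simp [evalFrom_nil]
  | succ k ih =>
    rw [List.replicate_succ', evalFrom_append, ih]
    simp [evalFrom_single, cyc, add_assoc]

theorem tc_cyc (n : ℕ) [NeZero n] (x : Fin 3) (hx : x ≠ 0) : tc (cyc n x).accepts = n + 1 := by
  have hacc : ∀ (i : ZMod n) (k : ℕ),
      (cyc n x).acc i (List.replicate k 0) ↔ i + k = 0 := by
    intro i k
    simp [acc, cyc_rep]
    simp [cyc]
  rw [tc_eq]
  · unfold trCount
    rw [Set.ncard_eq_toFinset_card', Set.toFinset_setOf, Finset.card_filter,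
      Fintype.sum_prod_type_right, Fin.sum_univ_three]
    have : x = 1 ∨ x = 2 := by clear hacc; revert x; decide
    rcases this with rfl | rfl <;> simp [cyc, apply_ite Option.isSome, ZMod.card]
  · intro q
    exact ⟨List.replicate q.val 0, by rw [cyc_rep]; simp [cyc]⟩
  · intro q
    exact ⟨List.replicate (-q).val 0, by rw [hacc]; simp⟩
  · intro p q h
    have := (h (List.replicate (-q).val 0)).2 (by rw [hacc]; simp)
    rw [hacc] at this
    simpa [add_neg_eq_zero] using this

/-- union automaton -/
def uni (m n : ℕ) : IDFA (Fin 3) ((ZMod m × ZMod n) ⊕ (ZMod m ⊕ ZMod n)) where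
  step s l := match s with
    | .inl (i, j) => if l = 0 then some (.inl (i + 1, j + 1)) else
        if l = 1 then (if i = 0 then some (.inr (.inl 0)) else none)
        else (if j = 0 then some (.inr (.inr 0)) else none)
    | .inr (.inl i) => if l = 0 then some (.inr (.inl (i + 1))) else
        if l = 1 then (if i = 0 then some (.inr (.inl 0)) else none) else none
    | .inr (.inr j) => if l = 0 then some (.inr (.inr (j + 1))) else
        if l = 2 then (if j = 0 then some (.inr (.inr 0)) else none) else none
  start := .inl (0, 0)
  accept := {s | match s with
    | .inl (i, j) => i = 0 ∨ j = 0
    | .inr (.inl i) => i = 0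
    | .inr (.inr j) => j = 0}

/-- combine -/
def comb {m n : ℕ} : Option (ZMod m) → Option (ZMod n) → Option ((ZMod m × ZMod n) ⊕ (ZMod m ⊕ ZMod n))
  | some i, some j => some (.inl (i, j))
  | some i, none => some (.inr (.inl i))
  | none, some j => some (.inr (.inr j))
  | none, none => none

theorem uni_eval (m n : ℕ) (w : List (Fin 3)) :
    (uni m n).eval w = comb ((cyc m 1).eval w) ((cyc n 2).eval w) := by
  induction w using List.reverseRecOn with
  | nil => rfl
  | append_singleton w a ih =>
    unfold eval at *
    rw [evalFrom_append, evalFrom_append, evalFrom_append, ih]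
    simp only [evalFrom_single]
    generalize (cyc m 1).evalFrom _ w = e
    generalize (cyc n 2).evalFrom _ w = f
    fin_cases a <;> rcases e with _ | i <;> rcases f with _ | j <;> simp [comb, uni, cyc] <;>
      split_ifs <;> simp

theorem uni_accepts (m n : ℕ) :
    (uni m n).accepts = (cyc m 1).accepts ∪ (cyc n 2).accepts := by
  ext w
  simp only [accepts, Set.mem_union, Set.mem_setOf_eq, uni_eval]
  generalize (cyc m 1).eval w = e
  generalize (cyc n 2).eval w = f
  rcases e with _ | i <;> rcases f with _ | j <;> simp [comb] <;> simp [uni, cyc]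

/-- shift -/
def shift {m n : ℕ} (k : ℕ) : (ZMod m × ZMod n) ⊕ (ZMod m ⊕ ZMod n) → (ZMod m × ZMod n) ⊕ (ZMod m ⊕ ZMod n)
  | .inl (i, j) => .inl (i + k, j + k)
  | .inr (.inl i) => .inr (.inl (i + k))
  | .inr (.inr j) => .inr (.inr (j + k))

theorem uni_rep (m n : ℕ) (s) (k : ℕ) :
    (uni m n).evalFrom s (List.replicate k 0) = some (shift k s) := by
  induction k with
  | zero => rcases s with ⟨i, j⟩ | i | j <;> simp [evalFrom_nil, shift]
  | succ k ih =>
    rw [List.replicate_succ', evalFrom_append, ih]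
    rcases s with ⟨i, j⟩ | i | j <;> simp [evalFrom_single, uni, shift, add_assoc]

theorem uni_acc1 (m n : ℕ) (s) (k : ℕ) :
    (uni m n).acc s (List.replicate k 0 ++ [1]) ↔
      match s with
      | .inl (i, _) => i + k = 0
      | .inr (.inl i) => i + k = 0
      | .inr (.inr _) => False := by
  unfold acc
  rw [evalFrom_append, uni_rep]
  rcases s with ⟨i, j⟩ | i | j <;> simp [evalFrom_single, uni, shift]

theorem uni_acc2 (m n : ℕ) (s) (k : ℕ) :
    (uni m n).acc s (List.replicate k 0 ++ [2]) ↔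
      match s with
      | .inl (_, j) => j + k = 0
      | .inr (.inl _) => False
      | .inr (.inr j) => j + k = 0 := by
  unfold acc
  rw [evalFrom_append, uni_rep]
  rcases s with ⟨i, j⟩ | i | j <;> simp [evalFrom_single, uni, shift]

theorem tc_uni (m n : ℕ) [NeZero m] [NeZero n] (h : Nat.Coprime m n) :
    tc (uni m n).accepts = m * n + 2 * m + 2 * n + 2 := by
  rw [tc_eq]
  · unfold trCount
    rw [Set.ncard_eq_toFinset_card', Set.toFinset_setOf, Finset.card_filter,
      Fintype.sum_prod_type_right, Fin.sum_univ_three]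
    simp only [Fintype.sum_sum_type, Fintype.sum_prod_type]
    simp [uni, apply_ite Option.isSome, ZMod.card]
    ring
  · rintro (⟨i, j⟩ | i | j)
    · obtain ⟨k, h1, h2⟩ := Nat.chineseRemainder h i.val j.val
      refine ⟨List.replicate k 0, ?_⟩
      rw [uni_rep]
      rw [← ZMod.natCast_eq_natCast_iff] at h1 h2
      simp [uni, shift, h1, h2]
    · refine ⟨[1] ++ List.replicate i.val 0, ?_⟩
      rw [evalFrom_append, evalFrom_single]
      simp [uni]
      rw [← uni, uni_rep]
      simp [shift]
    · refine ⟨[2] ++ List.replicate j.val 0, ?_⟩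
      rw [evalFrom_append, evalFrom_single]
      have : (uni m n).step (uni m n).start 2 = some (.inr (.inr 0)) := by simp [uni]
      rw [this, Option.bind_some, uni_rep]
      simp [shift]
  · rintro (⟨i, j⟩ | i | j)
    · exact ⟨List.replicate (-i).val 0 ++ [1], by rw [uni_acc1]; simp⟩
    · exact ⟨List.replicate (-i).val 0 ++ [1], by rw [uni_acc1]; simp⟩
    · exact ⟨List.replicate (-j).val 0 ++ [2], by rw [uni_acc2]; simp⟩
  · intro p q hpq
    have h1 := fun k : ZMod m => hpq (List.replicate (-k).val 0 ++ [1])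
    have h2 := fun k : ZMod n => hpq (List.replicate (-k).val 0 ++ [2])
    simp only [uni_acc1] at h1
    simp only [uni_acc2] at h2
    rcases p with ⟨i, j⟩ | i | j <;> rcases q with ⟨i', j'⟩ | i' | j' <;>
      simp [add_neg_eq_zero] at h1 h2 ⊢
    all_goals simp_all

theorem tc_union_lower_bound_three_letters
    (n₁ n₂ : ℕ) (hn₁ : 2 ≤ n₁) (hn₂ : 2 ≤ n₂) (hcop : Nat.Coprime n₁ n₂) :
    ∃ L₁ L₂ : Set (List (Fin 3)), IsRegularLang L₁ ∧ IsRegularLang L₂ ∧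
      tc L₁ = n₁ + 1 ∧ tc L₂ = n₂ + 1 ∧
      tc (L₁ ∪ L₂) = tc L₁ * tc L₂ + tc L₁ + tc L₂ - 1 := by
  haveI : NeZero n₁ := ⟨by omega⟩
  haveI : NeZero n₂ := ⟨by omega⟩
  refine ⟨(cyc n₁ 1).accepts, (cyc n₂ 2).accepts, ⟨_, inferInstance, _, rfl⟩,
    ⟨_, inferInstance, _, rfl⟩, tc_cyc n₁ 1 (by decide), tc_cyc n₂ 2 (by decide), ?_⟩
  rw [← uni_accepts, tc_uni n₁ n₂ hcop, tc_cyc n₁ 1 (by decide), tc_cyc n₂ 2 (by decide)]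
  symm
  apply Nat.sub_eq_of_eq_add
  ring
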